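/- arXiv:math/0703628 — 2 statements merged into one kernel-verified Lean document; each statement's English description precedes it below -/
import Mathlib

section
/- Let H be the group of 3×3 upper unitriangular matrices over ℤ (matrices with 1's on the diagonal and 0's below it), and let c ∈ H be the matrix with entry 1 in position (1,3), i.e., c = I + E₁₃. If f : H → ℝ is a pseudo-Jensen function with f(c) = 0, then f is an additive character of H: f(xy) = f(x) + f(y) for all x, y ∈ H. -/
/-!
The central powers of `c` do not affect `f`: on commuting pairs the quasi-Jensen inequality for
`xⁿ, yⁿ`, divided by `n`, becomes the exact Jensen identity, and this forces additivity on such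
pairs; hence `f (x * c ^ k) = f x + k * f c = f x`. Since every commutator is a power of `c`,
`(x * y) ^ n` and `x ^ n * y ^ n` differ by a power of `c`, so `n * f (x * y) = f (x ^ n * y ^ n)`
for all `x, y`. The same division by `n` therefore gives the exact Jensen identity for every pair,
and adding it to the identity for `(y, x)` yields additivity.
-/


open Matrix

/-- The Heisenberg group `UT(3, ℤ)` of 3×3 upper unitriangular integer matrices,
as a subgroup of `SL(3, ℤ)`. -/
def HeisenbergUT3 : Subgroup (Matrix.SpecialLinearGroup (Fin 3) ℤ) where
  carrier := {M | (M : Matrix (Fin 3) (Fin 3) ℤ) 1 0 = 0 ∧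
    (M : Matrix (Fin 3) (Fin 3) ℤ) 2 0 = 0 ∧
    (M : Matrix (Fin 3) (Fin 3) ℤ) 2 1 = 0 ∧
    (M : Matrix (Fin 3) (Fin 3) ℤ) 0 0 = 1 ∧
    (M : Matrix (Fin 3) (Fin 3) ℤ) 1 1 = 1 ∧
    (M : Matrix (Fin 3) (Fin 3) ℤ) 2 2 = 1}
  one_mem' := by
    refine ⟨?_, ?_, ?_, ?_, ?_, ?_⟩ <;>
      simp [Matrix.SpecialLinearGroup.coe_one, Matrix.one_apply]
  mul_mem' := by
    rintro a b ⟨ha10, ha20, ha21, ha00, ha11, ha22⟩ ⟨hb10, hb20, hb21, hb00, hb11, hb22⟩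
    refine ⟨?_, ?_, ?_, ?_, ?_, ?_⟩ <;>
      simp [Matrix.SpecialLinearGroup.coe_mul, Matrix.mul_apply, Fin.sum_univ_three,
        ha10, ha20, ha21, ha00, ha11, ha22, hb10, hb20, hb21, hb00, hb11, hb22]
  inv_mem' := by
    rintro a ⟨h10, h20, h21, h00, h11, h22⟩
    have hmul : (a : Matrix (Fin 3) (Fin 3) ℤ) * ((a⁻¹ : Matrix.SpecialLinearGroup (Fin 3) ℤ) : Matrix (Fin 3) (Fin 3) ℤ) = 1 := by
      rw [← Matrix.SpecialLinearGroup.coe_mul, mul_inv_cancel,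
        Matrix.SpecialLinearGroup.coe_one]
    set N := ((a⁻¹ : Matrix.SpecialLinearGroup (Fin 3) ℤ) : Matrix (Fin 3) (Fin 3) ℤ) with hN
    have key : ∀ i j, ∑ k, (a : Matrix (Fin 3) (Fin 3) ℤ) i k * N k j
        = (1 : Matrix (Fin 3) (Fin 3) ℤ) i j := by
      intro i j; rw [← Matrix.mul_apply, hmul]
    have e20 := key 2 0
    have e10 := key 1 0
    have e21 := key 2 1
    have e22 := key 2 2
    have e11 := key 1 1
    have e00 := key 0 0
    simp [Fin.sum_univ_three, h10, h20, h21, h00, h11, h22, Matrix.one_apply] at e20 e10 e21 e22 e11 e00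
    rw [e20] at e10
    rw [e21] at e11
    simp only [mul_zero, add_zero] at e10 e11
    rw [e10, e20] at e00
    simp only [mul_zero, add_zero] at e00
    exact ⟨e10, e20, e21, e00, e11, e22⟩

/-- The matrix `c = I + E₁₃` as an element of the Heisenberg group. -/
def heisC : HeisenbergUT3 :=
  ⟨⟨!![1, 0, 1; 0, 1, 0; 0, 0, 1], by decide⟩,
    by refine ⟨?_, ?_, ?_, ?_, ?_, ?_⟩ <;> decide⟩

/-- The matrix `a = I + E₂₃` as an element of the Heisenberg group. -/
def heisA : HeisenbergUT3 :=
  ⟨⟨!![1, 0, 0; 0, 1, 1; 0, 0, 1], by decide⟩,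
    by refine ⟨?_, ?_, ?_, ?_, ?_, ?_⟩ <;> decide⟩

/-- The matrix `b = I + E₁₂` as an element of the Heisenberg group. -/
def heisB : HeisenbergUT3 :=
  ⟨⟨!![1, 1, 0; 0, 1, 0; 0, 0, 1], by decide⟩,
    by refine ⟨?_, ?_, ?_, ?_, ?_, ?_⟩ <;> decide⟩

/-- A function `f : H → ℝ` is quasi-Jensen if there is `c₀ > 0` with
`|f(xy) + f(xy⁻¹) − 2f(x)| ≤ c₀` for all `x, y`. -/
def QuasiJensen {H : Type*} [Group H] (f : H → ℝ) : Prop :=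
  ∃ c₀ > (0 : ℝ), ∀ x y : H, |f (x * y) + f (x * y⁻¹) - 2 * f x| ≤ c₀

/-- A function `f : H → ℝ` is pseudo-Jensen if it is quasi-Jensen and
`f(xⁿ) = n·f(x)` for all `x` and all integers `n`. -/
def PseudoJensen {H : Type*} [Group H] (f : H → ℝ) : Prop :=
  QuasiJensen f ∧ ∀ (x : H) (n : ℤ), f (x ^ n) = (n : ℝ) * f x

lemma heis_ext {x y : HeisenbergUT3} (h01 : x.1.1 0 1 = y.1.1 0 1)
    (h12 : x.1.1 1 2 = y.1.1 1 2) (h02 : x.1.1 0 2 = y.1.1 0 2) : x = y := by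
  obtain ⟨hx10, hx20, hx21, hx00, hx11, hx22⟩ := x.2
  obtain ⟨hy10, hy20, hy21, hy00, hy11, hy22⟩ := y.2
  apply Subtype.ext
  apply Subtype.ext
  ext i j
  fin_cases i <;> fin_cases j <;> simp_all

lemma heis_mul_01 (x y : HeisenbergUT3) : (x * y).1.1 0 1 = x.1.1 0 1 + y.1.1 0 1 := by
  obtain ⟨hx10, hx20, hx21, hx00, hx11, hx22⟩ := x.2
  obtain ⟨hy10, hy20, hy21, hy00, hy11, hy22⟩ := y.2
  change (x.1.1 * y.1.1) 0 1 = _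
  rw [Matrix.mul_apply, Fin.sum_univ_three, hx00, hy11, hy21]
  ring

lemma heis_mul_12 (x y : HeisenbergUT3) : (x * y).1.1 1 2 = x.1.1 1 2 + y.1.1 1 2 := by
  obtain ⟨hx10, hx20, hx21, hx00, hx11, hx22⟩ := x.2
  obtain ⟨hy10, hy20, hy21, hy00, hy11, hy22⟩ := y.2
  change (x.1.1 * y.1.1) 1 2 = _
  rw [Matrix.mul_apply, Fin.sum_univ_three, hx10, hx11, hy22]
  ring

lemma heis_mul_02 (x y : HeisenbergUT3) :
    (x * y).1.1 0 2 = x.1.1 0 2 + y.1.1 0 2 + x.1.1 0 1 * y.1.1 1 2 := by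
  obtain ⟨hx10, hx20, hx21, hx00, hx11, hx22⟩ := x.2
  obtain ⟨hy10, hy20, hy21, hy00, hy11, hy22⟩ := y.2
  change (x.1.1 * y.1.1) 0 2 = _
  rw [Matrix.mul_apply, Fin.sum_univ_three, hx00, hy22]
  ring

/-- The homomorphism `k ↦ I + k E₁₃` from `ℤ` to the Heisenberg group. -/
def heisZ : Multiplicative ℤ →* HeisenbergUT3 where
  toFun k := ⟨⟨!![1, 0, k.toAdd; 0, 1, 0; 0, 0, 1], by simp [Matrix.det_fin_three]⟩,
    by refine ⟨?_, ?_, ?_, ?_, ?_, ?_⟩ <;> simp⟩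
  map_one' := heis_ext (by simp) (by simp) (by simp)
  map_mul' a b := by
    apply heis_ext
    · rw [heis_mul_01]; simp
    · rw [heis_mul_12]; simp
    · rw [heis_mul_02]; simp

lemma heisC_zpow (k : ℤ) : heisC ^ k = heisZ (Multiplicative.ofAdd k) := by
  have h : heisC = heisZ (Multiplicative.ofAdd 1) := rfl
  rw [h, ← map_zpow, ← ofAdd_zsmul, smul_eq_mul, mul_one]

lemma heisC_commute (x : HeisenbergUT3) : Commute x heisC := by
  apply heis_ext
  · simp only [heis_mul_01]; ring
  · simp only [heis_mul_12]; ring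
  · simp only [heis_mul_02]; simp [heisC, add_comm]

lemma exists_mul_comm_heisC (x y : HeisenbergUT3) : ∃ k : ℤ, y * x = x * y * heisC ^ k := by
  -- The exponent is the difference of the (1,3)-entries of the two products.
  refine ⟨y.1.1 0 1 * x.1.1 1 2 - x.1.1 0 1 * y.1.1 1 2, ?_⟩
  rw [heisC_zpow]
  apply heis_ext
  · simp only [heis_mul_01]; simp [heisZ, add_comm]
  · simp only [heis_mul_12]; simp [heisZ, add_comm]
  · simp only [heis_mul_02, heis_mul_01]; simp [heisZ]; ring

lemma exists_mul_pow_heisC (x y : HeisenbergUT3) (n : ℕ) :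
    ∃ k : ℤ, (x * y) ^ n = x ^ n * y ^ n * heisC ^ k := by
  induction n with
  | zero => exact ⟨0, by simp⟩
  | succ n ih =>
    obtain ⟨k, hk⟩ := ih
    obtain ⟨j, hj⟩ := exists_mul_comm_heisC x (y ^ n)
    refine ⟨j + k, ?_⟩
    have hc (z : HeisenbergUT3) (m : ℤ) : heisC ^ m * z = z * heisC ^ m :=
      ((heisC_commute z).zpow_right m).eq.symm
    calc (x * y) ^ (n + 1) = x ^ n * (y ^ n * x) * y * heisC ^ k := by
          rw [pow_succ, hk, mul_assoc, hc]; simp only [mul_assoc]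
      _ = x ^ n * x * y ^ n * (heisC ^ j * y) * heisC ^ k := by
          rw [hj]; simp only [mul_assoc]
      _ = x ^ (n + 1) * y ^ (n + 1) * heisC ^ (j + k) := by
          rw [hc, _root_.zpow_add, pow_succ, pow_succ]; simp only [mul_assoc]

/-- If `f` sends `(x * y) ^ n` and `x ^ n * y ^ n` to the same value, and likewise for the other
pairs built from `x`, `y`, then homogeneity turns the quasi-Jensen bound into additivity. -/
lemma PseudoJensen.map_mul_of_map_pow {H : Type*} [Group H] {f : H → ℝ} (hf : PseudoJensen f)
    {x y : H} (h₁ : ∀ n : ℕ, f ((x * y) ^ n) = f (x ^ n * y ^ n))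
    (h₂ : ∀ n : ℕ, f ((x * y⁻¹) ^ n) = f (x ^ n * (y⁻¹) ^ n))
    (h₃ : ∀ n : ℕ, f ((y * x) ^ n) = f (y ^ n * x ^ n))
    (h₄ : ∀ n : ℕ, f ((y * x⁻¹) ^ n) = f (y ^ n * (x⁻¹) ^ n))
    (hxy : f (y * x) = f (x * y)) : f (x * y) = f x + f y := by
  obtain ⟨⟨c₀, -, hq⟩, hh⟩ := hf
  have hpow (z : H) (n : ℕ) : f (z ^ n) = n * f z := by simpa using hh z n
  have jensen (u v : H) (h : ∀ n : ℕ, f ((u * v) ^ n) = f (u ^ n * v ^ n))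
      (h' : ∀ n : ℕ, f ((u * v⁻¹) ^ n) = f (u ^ n * (v⁻¹) ^ n)) :
      f (u * v) + f (u * v⁻¹) - 2 * f u = 0 := by
    by_contra hne
    obtain ⟨n, hn⟩ := exists_nat_gt (c₀ / |f (u * v) + f (u * v⁻¹) - 2 * f u|)
    rw [div_lt_iff₀ (abs_pos.mpr hne)] at hn
    have hb := hq (u ^ n) (v ^ n)
    rw [← inv_pow, ← h, ← h', hpow, hpow, hpow] at hb
    have e : n * f (u * v) + n * f (u * v⁻¹) - 2 * (n * f u)
        = n * (f (u * v) + f (u * v⁻¹) - 2 * f u) := by ring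
    rw [e, abs_mul, Nat.abs_cast] at hb
    linarith
  have hinv : f (y * x⁻¹) = - f (x * y⁻¹) := by
    have := hh (x * y⁻¹) (-1)
    simpa using this
  have e₁ := jensen x y h₁ h₂
  have e₂ := jensen y x h₃ h₄
  linarith

lemma PseudoJensen.map_mul_of_commute {H : Type*} [Group H] {f : H → ℝ} (hf : PseudoJensen f)
    {x y : H} (h : Commute x y) : f (x * y) = f x + f y :=
  hf.map_mul_of_map_pow (fun n => by rw [h.mul_pow]) (fun n => by rw [h.inv_right.mul_pow])
    (fun n => by rw [h.symm.mul_pow]) (fun n => by rw [h.symm.inv_right.mul_pow]) (by rw [h.eq])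

/-- Lemma 3.7 / `metab-1`.  If `f` is a pseudo-Jensen function
on the Heisenberg group `UT(3, ℤ)` with `f(c) = 0` (where `c = I + E₁₃`), then
`f` is an additive character of `H`. -/
theorem stmt14 (f : HeisenbergUT3 → ℝ) (hf : PseudoJensen f)
    (hfc : f heisC = 0) :
    ∀ x y : HeisenbergUT3, f (x * y) = f x + f y := by
  have hc (x : HeisenbergUT3) (k : ℤ) : f (x * heisC ^ k) = f x := by
    rw [hf.map_mul_of_commute ((heisC_commute x).zpow_right k), hf.2, hfc, mul_zero, add_zero]
  have hpow (x y : HeisenbergUT3) (n : ℕ) : f ((x * y) ^ n) = f (x ^ n * y ^ n) := by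
    obtain ⟨k, hk⟩ := exists_mul_pow_heisC x y n
    rw [hk, hc]
  intro x y
  refine hf.map_mul_of_map_pow (hpow _ _) (hpow _ _) (hpow _ _) (hpow _ _) ?_
  obtain ⟨k, hk⟩ := exists_mul_comm_heisC x y
  rw [hk, hc]
end

section
/- Let H be the group of 3×3 upper unitriangular matrices over ℤ, let a = I + E₂₃ (entry 1 in position (2,3)), b = I + E₁₂ (entry 1 in position (1,2)), and c = I + E₁₃ (entry 1 in position (1,3)). If f : H → ℝ is a pseudo-Jensen function with f(a) = f(b) = f(c) = 0, then f ≡ 0 on H. -/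
/-!
In exponential coordinates `(x, y, t)` with `t = z - x y / 2`, powers in the Heisenberg group are
scalar multiples, and `v w`, `v w⁻¹` are `v + u`, `v - u` with `u = w + [v, w] / 2`. Hence a
quasi-Jensen condition on the group is a quasi-Jensen condition for the *abelian* structure of the
coordinates. To stay on integral elements, it is used on the elements `(4x, 4y, 2s)`
(`heisExp`), for which the midpoint of any two is integral: if `p`, `q` are two of them with
midpoint `v`, then `q = v p⁻¹ v` (`heisMk_midpoint`), so `f p + f q` is within `c₀` of
`2 f v = f (v ^ 2) = f (p + q)`. Homogeneity upgrades this to exact additivity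
(`heisExp_additive`), so `f` vanishes on all `heisExp x y s` once it does on the powers of `a, b, c`;
finally the fourth power of every element has this form.
-/

open Matrix

/-- The matrix with entries `x`, `y`, `z` in positions `(1,2)`, `(2,3)`, `(1,3)`. -/
def heisMk (x y z : ℤ) : HeisenbergUT3 :=
  ⟨⟨!![1, x, z; 0, 1, y; 0, 0, 1], by simp [Matrix.det_fin_three]⟩,
    by refine ⟨?_, ?_, ?_, ?_, ?_, ?_⟩ <;> simp⟩

lemma heisMk_surj (g : HeisenbergUT3) : ∃ x y z, g = heisMk x y z := by
  obtain ⟨M, h10, h20, h21, h00, h11, h22⟩ := g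
  refine ⟨M.1 0 1, M.1 1 2, M.1 0 2, ?_⟩
  apply Subtype.ext
  apply Subtype.ext
  ext i j
  fin_cases i <;> fin_cases j <;> simp [heisMk, *]

lemma heisMk_mul (x y z x' y' z' : ℤ) :
    heisMk x y z * heisMk x' y' z' = heisMk (x + x') (y + y') (z + z' + x * y') := by
  apply Subtype.ext
  apply Subtype.ext
  change !![1, x, z; 0, 1, y; 0, 0, 1] * !![1, x', z'; 0, 1, y'; 0, 0, 1] =
    !![1, x + x', z + z' + x * y'; 0, 1, y + y'; 0, 0, 1]
  ext i j
  fin_cases i <;> fin_cases j <;>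
    simp [Matrix.mul_apply, Fin.sum_univ_three] <;> ring

lemma heisMk_zero : heisMk 0 0 0 = 1 := by
  have h := heisMk_mul 0 0 0 0 0 0
  simpa using h

lemma heisMk_inv (x y z : ℤ) : (heisMk x y z)⁻¹ = heisMk (-x) (-y) (x * y - z) := by
  rw [inv_eq_iff_mul_eq_one, heisMk_mul, ← heisMk_zero]
  congr 1 <;> ring

/-- The element with exponential coordinates `(4x, 4y, 2s)`; the `(1,3)` entry is
`2s + (4x)(4y)/2`. -/
def heisExp (x y s : ℤ) : HeisenbergUT3 := heisMk (4 * x) (4 * y) (2 * s + 8 * x * y)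

lemma heisExp_zpow (x y s n : ℤ) :
    heisExp x y s ^ n = heisExp (n * x) (n * y) (n * s) := by
  have key : ∀ n : ℕ, heisExp x y s ^ n = heisExp (n * x) (n * y) (n * s) := by
    intro n
    induction n with
    | zero => simp [heisExp, heisMk_zero]
    | succ k ih =>
      rw [pow_succ, ih]
      simp only [heisExp, heisMk_mul]
      push_cast
      congr 1 <;> ring
  obtain ⟨m, rfl | rfl⟩ := n.eq_nat_or_neg
  · rw [zpow_natCast, key]
  · rw [_root_.zpow_neg, zpow_natCast, key]
    simp only [heisExp, heisMk_inv]
    congr 1 <;> ring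

/-- The element with exponential coordinates `(2(x + x'), 2(y + y'), s + s')` is the midpoint of
`heisExp x y s` and `heisExp x' y' s'`: these two are exchanged by `p ↦ v p⁻¹ v`. -/
lemma heisMk_midpoint (x y s x' y' s' : ℤ) :
    let v := heisMk (2 * (x + x')) (2 * (y + y')) (s + s' + 2 * (x + x') * (y + y'))
    v * (heisExp x y s)⁻¹ * v = heisExp x' y' s' ∧
      v ^ (2 : ℤ) = heisExp (x + x') (y + y') (s + s') := by
  refine ⟨?_, ?_⟩
  · simp only [heisExp, heisMk_inv, heisMk_mul]
    congr 1 <;> ring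
  · rw [zpow_two]
    simp only [heisExp, heisMk_mul]
    congr 1 <;> ring

lemma heisExp_additive (f : HeisenbergUT3 → ℝ) (hf : PseudoJensen f) (x y s x' y' s' : ℤ) :
    f (heisExp (x + x') (y + y') (s + s')) = f (heisExp x y s) + f (heisExp x' y' s') := by
  obtain ⟨⟨c₀, -, hJ⟩, hpow⟩ := hf
  have quasi : ∀ x y s x' y' s' : ℤ, |f (heisExp x y s) + f (heisExp x' y' s') -
      f (heisExp (x + x') (y + y') (s + s'))| ≤ c₀ := by
    intro x y s x' y' s'
    obtain ⟨h1, h2⟩ := heisMk_midpoint x y s x' y' s'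
    set v := heisMk (2 * (x + x')) (2 * (y + y')) (s + s' + 2 * (x + x') * (y + y'))
    have h := hJ v (v⁻¹ * heisExp x y s)
    rw [mul_inv_cancel_left, _root_.mul_inv_rev, inv_inv, ← mul_assoc, h1] at h
    rw [← h2, hpow]
    exact_mod_cast h
  set d := f (heisExp x y s) + f (heisExp x' y' s') - f (heisExp (x + x') (y + y') (s + s'))
    with hd
  have bound : ∀ n : ℕ, (n : ℝ) * |d| ≤ c₀ := by
    -- Scaling both points by `n` multiplies the defect `d` by `n`, but it stays below `c₀`.
    intro n
    have h := quasi (n * x) (n * y) (n * s) (n * x') (n * y') (n * s')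
    simp only [← mul_add, ← heisExp_zpow, hpow] at h
    rw [← mul_sub, abs_mul] at h
    simpa using h
  have d_zero : d = 0 := by
    by_contra hne
    obtain ⟨n, hn⟩ := exists_nat_gt (c₀ / |d|)
    rw [div_lt_iff₀ (abs_pos.mpr hne)] at hn
    exact absurd (bound n) (not_le.mpr hn)
  linarith

/-- Lemma 3.8 / `metab-2`.  If `f` is a pseudo-Jensen function
on the Heisenberg group `UT(3, ℤ)` with `f(a) = f(b) = f(c) = 0` (where
`a = I + E₂₃`, `b = I + E₁₂`, `c = I + E₁₃`), then `f ≡ 0`. -/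
theorem stmt15 (f : HeisenbergUT3 → ℝ) (hf : PseudoJensen f)
    (hfa : f heisA = 0) (hfb : f heisB = 0) (hfc : f heisC = 0) :
    ∀ x : HeisenbergUT3, f x = 0 := by
  have hpow := hf.2
  have hA : heisExp 0 1 0 = heisA ^ (4 : ℤ) := by
    change _ = heisMk 0 1 0 ^ ((4 : ℕ) : ℤ)
    rw [zpow_natCast]
    simp [pow_succ, heisMk_mul, heisExp]
  have hB : heisExp 1 0 0 = heisB ^ (4 : ℤ) := by
    change _ = heisMk 1 0 0 ^ ((4 : ℕ) : ℤ)
    rw [zpow_natCast]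
    simp [pow_succ, heisMk_mul, heisExp]
  have hC : heisExp 0 0 1 = heisC ^ (2 : ℤ) := by
    change _ = heisMk 0 0 1 ^ ((2 : ℕ) : ℤ)
    rw [zpow_natCast]
    simp [pow_succ, heisMk_mul, heisExp]
  have vanish : ∀ x y s : ℤ, f (heisExp x y s) = 0 := by
    intro x y s
    have h1 := heisExp_additive f hf x 0 0 0 y s
    have h2 := heisExp_additive f hf 0 y 0 0 0 s
    have hx := heisExp_zpow 1 0 0 x
    have hy := heisExp_zpow 0 1 0 y
    have hs := heisExp_zpow 0 0 1 s
    simp only [add_zero, zero_add, mul_one, mul_zero] at h1 h2 hx hy hs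
    rw [h1, h2, ← hx, ← hy, ← hs, hpow, hpow, hpow, hA, hB, hC, hpow, hpow, hpow, hfa, hfb, hfc]
    simp
  intro g
  obtain ⟨x, y, z, rfl⟩ := heisMk_surj g
  have h4 : heisMk x y z ^ ((4 : ℕ) : ℤ) = heisExp x y (2 * z - x * y) := by
    rw [zpow_natCast]
    simp only [pow_succ, pow_zero, one_mul, heisMk_mul, heisExp]
    congr 1 <;> ring
  have h := hpow (heisMk x y z) ((4 : ℕ) : ℤ)
  rw [h4, vanish] at h
  simpa using h.symm
end
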